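/- arXiv:1407.5291 — 2 statements merged into one kernel-verified Lean document; each statement's English description precedes it below -/
import Mathlib

section
/- Let s ≥ 2 be an integer, let c > λ_s^{-1}, and let B be an infinite set of positive integers whose counting function satisfies B(n) ≥ (1+o(1))·c·log n. For each integer n ≥ 2 for which it exists, let m(n) be the smallest positive integer with B(m(n)) = ⌊((c + λ_s^{-1})/2)·log n⌋, and let Ω_n be the collection of s-element sets ω of positive integers such that n − σ(ω) ∈ B and n − σ(ω) < m(n), where σ(ω) denotes the sum of the elements of ω. Then Σ s^{-|ω∪ω'|} · ∏_{x∈ω∪ω'} x^{-1+1/s} ≪ n^{-1/s}·(log n)^3, where the sum runs over all ordered pairs (ω, ω') of elements of Ω_n with ω ≠ ω' and ω ∩ ω' ≠ ∅, and the implied constant depends only on s, c and B. -/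
open Finset Filter

/-- `λ_s = Γ(1/s)^s / (s^s · s!)`. -/
noncomputable def lambdaS (s : ℕ) : ℝ :=
  (Real.Gamma (1 / s)) ^ s / ((s : ℝ) ^ s * (Nat.factorial s))

/-- The counting function `B(n) = |B ∩ [1, n]|` of a set of positive integers. -/
noncomputable def countB (B : Set ℕ) (n : ℕ) : ℕ := (B ∩ Set.Icc 1 n).ncard


/-- power sums -/
lemma aux_S (a : ℝ) (ha : 0 < a) (ha1 : a ≤ 1) (M : ℕ) :
    ∑ x ∈ Icc 1 M, (x : ℝ) ^ (-1 + a) ≤ (1 / a) * (M : ℝ) ^ a := by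
  induction M with
  | zero => simp; positivity
  | succ M ih =>
    rw [Finset.sum_Icc_succ_top (by omega)]
    have hM : (0 : ℝ) < ((M + 1 : ℕ) : ℝ) := by positivity
    have h1 : (M : ℝ) ^ a ≤ ((M + 1 : ℕ) : ℝ) ^ a - a * ((M + 1 : ℕ) : ℝ) ^ (-1 + a) := by
      have h2 : (M : ℝ) = ((M + 1 : ℕ) : ℝ) * (1 + (-1 / ((M + 1 : ℕ) : ℝ))) := by
        field_simp; push_cast; ring
      have h3 : -1 ≤ -1 / ((M + 1 : ℕ) : ℝ) := by
        rw [le_div_iff₀ hM]; push_cast; linarith [(Nat.cast_nonneg M : (0 : ℝ) ≤ M)]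
      have h4 := rpow_one_add_le_one_add_mul_self h3 ha.le ha1
      calc (M : ℝ) ^ a = (((M + 1 : ℕ) : ℝ) * (1 + (-1 / ((M + 1 : ℕ) : ℝ)))) ^ a := by rw [← h2]
        _ = ((M + 1 : ℕ) : ℝ) ^ a * (1 + (-1 / ((M + 1 : ℕ) : ℝ))) ^ a :=
            Real.mul_rpow hM.le (by linarith)
        _ ≤ ((M + 1 : ℕ) : ℝ) ^ a * (1 + a * (-1 / ((M + 1 : ℕ) : ℝ))) := by gcongr
        _ = _ := by
            rw [Real.rpow_add hM, Real.rpow_neg_one]; field_simp; ring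
    have h5 : (1 / a) * (M : ℝ) ^ a ≤ (1 / a) * (((M + 1 : ℕ) : ℝ) ^ a - a * ((M + 1 : ℕ) : ℝ) ^ (-1 + a)) := by
      gcongr
    have h6 : (1 / a) * (((M + 1 : ℕ) : ℝ) ^ a - a * ((M + 1 : ℕ) : ℝ) ^ (-1 + a)) =
      (1 / a) * ((M + 1 : ℕ) : ℝ) ^ a - ((M + 1 : ℕ) : ℝ) ^ (-1 + a) := by field_simp
    linarith

lemma aux_L (q : ℝ) (M : ℕ) (hM : 1 ≤ M) :
    ∑ x ∈ Icc 1 M, (x : ℝ) ^ (-q) ≤ (1 + Real.log M) * (1 + (M : ℝ) ^ (1 - q)) := by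
  have h1 : ∀ x ∈ Icc 1 M, (x : ℝ) ^ (-q) ≤ (x : ℝ)⁻¹ * (1 + (M : ℝ) ^ (1 - q)) := by
    intro x hx
    rw [Finset.mem_Icc] at hx
    have hx0 : (1 : ℝ) ≤ x := by exact_mod_cast hx.1
    have hxM : (x : ℝ) ≤ M := by exact_mod_cast hx.2
    have : (x : ℝ) ^ (-q) = (x : ℝ)⁻¹ * (x : ℝ) ^ (1 - q) := by
      rw [← Real.rpow_neg_one, ← Real.rpow_add (by linarith)]; ring_nf
    rw [this]
    gcongr
    rcases le_total 0 (1 - q) with h | h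
    · have := Real.rpow_le_rpow (by linarith) hxM h
      linarith
    · have := Real.rpow_le_one_of_one_le_of_nonpos hx0 h
      have : (0 : ℝ) ≤ (M : ℝ) ^ (1 - q) := by positivity
      linarith
  refine (Finset.sum_le_sum h1).trans ?_
  rw [← Finset.sum_mul]
  gcongr
  have := harmonic_le_one_add_log M
  rw [harmonic_eq_sum_Icc] at this
  push_cast at this
  exact this

/-- splitting a convolution -/
lemma aux_conv (p q : ℝ) (hp : 0 < p) (hq : 0 < q) (M : ℕ) (hM : 1 ≤ M) :
    ∑ x ∈ range M, (x : ℝ) ^ (-p) * ((M - x : ℕ) : ℝ) ^ (-q) ≤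
      ((M : ℝ) / 2) ^ (-q) * ∑ x ∈ Icc 1 M, (x : ℝ) ^ (-p) +
      ((M : ℝ) / 2) ^ (-p) * ∑ x ∈ Icc 1 M, (x : ℝ) ^ (-q) := by
  have hM0 : (0 : ℝ) < M := by exact_mod_cast hM
  have key : ∀ x ∈ range M, (x : ℝ) ^ (-p) * ((M - x : ℕ) : ℝ) ^ (-q) ≤
      ((M : ℝ) / 2) ^ (-q) * (x : ℝ) ^ (-p) + ((M : ℝ) / 2) ^ (-p) * ((M - x : ℕ) : ℝ) ^ (-q) := by
    intro x hx
    rw [Finset.mem_range] at hx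
    have hc : ((M - x : ℕ) : ℝ) = M - x := by rw [Nat.cast_sub hx.le]
    have hxM : (x : ℝ) < M := by exact_mod_cast hx
    have e1 : (0 : ℝ) ≤ (x : ℝ) ^ (-p) := by positivity
    have e2 : (0 : ℝ) ≤ ((M - x : ℕ) : ℝ) ^ (-q) := by positivity
    have e3 : (0 : ℝ) ≤ ((M : ℝ) / 2) ^ (-p) := by positivity
    have e4 : (0 : ℝ) ≤ ((M : ℝ) / 2) ^ (-q) := by positivity
    rcases le_total ((M : ℝ) / 2) x with h | h
    · have := Real.rpow_le_rpow_of_nonpos (by positivity) h (by linarith : -p ≤ 0)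
      nlinarith [mul_le_mul_of_nonneg_right this e2, mul_nonneg e4 e1]
    · have := Real.rpow_le_rpow_of_nonpos (by positivity)
        (by rw [hc]; linarith : (M : ℝ) / 2 ≤ ((M - x : ℕ) : ℝ)) (by linarith : -q ≤ 0)
      nlinarith [mul_le_mul_of_nonneg_left this e1, mul_nonneg e3 e2]
  refine (Finset.sum_le_sum key).trans ?_
  rw [Finset.sum_add_distrib, ← Finset.mul_sum, ← Finset.mul_sum]
  have r1 : ∑ x ∈ range M, (x : ℝ) ^ (-p) ≤ ∑ x ∈ Icc 1 M, (x : ℝ) ^ (-p) := by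
    rw [← Finset.sum_subset (s₁ := (range M).filter (fun x => x ≠ 0)) (Finset.filter_subset _ _)]
    · apply Finset.sum_le_sum_of_subset_of_nonneg
      · intro x; simp; omega
      · intros; positivity
    · intro x _ h
      have : x = 0 := by by_contra h'; exact h (by simp_all)
      subst this
      simp [Real.zero_rpow (by linarith : -p ≠ 0)]
  have r2 : ∑ x ∈ range M, ((M - x : ℕ) : ℝ) ^ (-q) = ∑ x ∈ Icc 1 M, (x : ℝ) ^ (-q) := by
    apply Finset.sum_bij' (fun x _ => M - x) (fun x _ => M - x)
    · intro x; simp; omega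
    · intro x; simp; omega
    · intro x; simp; omega
    · intro x; simp; omega
    · intro x _; rfl
  rw [r2]
  gcongr

lemma aux_conv1 (a b : ℝ) (ha : 0 < a) (ha1 : a < 1) (hb : 0 < b) (hb1 : b < 1) :
    ∃ C : ℝ, 0 ≤ C ∧ ∀ M : ℕ,
    ∑ x ∈ range M, (x : ℝ) ^ (-1 + a) * ((M - x : ℕ) : ℝ) ^ (-1 + b) ≤ C * (M : ℝ) ^ (-1 + (a + b)) := by
  refine ⟨(1 / 2) ^ (-1 + b) * (1 / a) + (1 / 2) ^ (-1 + a) * (1 / b), by positivity, fun M => ?_⟩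
  rcases Nat.eq_zero_or_pos M with rfl | hM
  · simp only [Finset.range_zero, Finset.sum_empty]; positivity
  have hM0 : (0 : ℝ) < M := by exact_mod_cast hM
  have h := aux_conv (1 - a) (1 - b) (by linarith) (by linarith) M hM
  rw [show -(1 - a) = -1 + a by ring, show -(1 - b) = -1 + b by ring] at h
  refine h.trans ?_
  have h1 := aux_S a ha ha1.le M
  have h2 := aux_S b hb hb1.le M
  calc _ ≤ ((M : ℝ) / 2) ^ (-1 + b) * ((1 / a) * (M : ℝ) ^ a) +
      ((M : ℝ) / 2) ^ (-1 + a) * ((1 / b) * (M : ℝ) ^ b) := by gcongr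
    _ = _ := by
      rw [div_eq_mul_one_div (M : ℝ) 2, Real.mul_rpow hM0.le (by norm_num),
        Real.mul_rpow hM0.le (by norm_num), show -1 + (a + b) = (-1 + a) + b by ring,
        Real.rpow_add hM0 (-1 + a) b, Real.rpow_add hM0 (-1) a, Real.rpow_add hM0 (-1) b]
      ring

lemma aux_conv2 (a e : ℝ) (he : 0 < e) (ha : e ≤ a) (ha1 : a ≤ 1 - e) :
    ∃ C : ℝ, 0 ≤ C ∧ ∀ M : ℕ, 1 ≤ M →
    ∑ x ∈ range M, (x : ℝ) ^ (-1 + a) * (((M - x : ℕ) : ℝ) ^ (-a)) ^ 2 ≤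
      C * ((M : ℝ) ^ (-e) * (1 + Real.log M)) := by
  refine ⟨(1 / 2) ^ (-(2 * a)) * (1 / a) + (1 / 2) ^ (-1 + a) * 2, ?_, fun M hM => ?_⟩
  · have : 0 < a := by linarith
    positivity
  have hM0 : (0 : ℝ) < M := by exact_mod_cast hM
  have hM1 : (1 : ℝ) ≤ M := by exact_mod_cast hM
  have hlog : 0 ≤ Real.log M := Real.log_nonneg hM1
  have ha0 : 0 < a := by linarith
  have h := aux_conv (1 - a) (2 * a) (by linarith) (by linarith) M hM
  rw [show -(1 - a) = -1 + a by ring] at h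
  have hsq : ∀ y : ℕ, ((y : ℝ) ^ (-a)) ^ 2 = (y : ℝ) ^ (-(2 * a)) := by
    intro y
    rw [← Real.rpow_natCast, ← Real.rpow_mul (by positivity)]
    congr 1; push_cast; ring
  simp only [hsq]
  refine h.trans ?_
  have h1 := aux_S a ha0 (by linarith) M
  have h2 := aux_L (2 * a) M hM
  have k1 : (M : ℝ) ^ (-a) ≤ (M : ℝ) ^ (-e) := Real.rpow_le_rpow_of_exponent_le hM1 (by linarith)
  have k2 : (M : ℝ) ^ (-1 + a) ≤ (M : ℝ) ^ (-e) := Real.rpow_le_rpow_of_exponent_le hM1 (by linarith)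
  calc _ ≤ ((M : ℝ) / 2) ^ (-(2 * a)) * ((1 / a) * (M : ℝ) ^ a) +
      ((M : ℝ) / 2) ^ (-1 + a) * ((1 + Real.log M) * (1 + (M : ℝ) ^ (1 - 2 * a))) := by gcongr
    _ = (1 / 2) ^ (-(2 * a)) * (1 / a) * (M : ℝ) ^ (-a) +
        (1 / 2) ^ (-1 + a) * ((M : ℝ) ^ (-1 + a) + (M : ℝ) ^ (-a)) * (1 + Real.log M) := by
      rw [div_eq_mul_one_div (M : ℝ) 2, Real.mul_rpow hM0.le (by norm_num),
        Real.mul_rpow hM0.le (by norm_num)]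
      have z1 : (M : ℝ) ^ (-a) = (M : ℝ) ^ (-(2 * a)) * (M : ℝ) ^ a := by
        rw [← Real.rpow_add hM0]; ring_nf
      have z2 : (M : ℝ) ^ (-a) = (M : ℝ) ^ (-1 + a) * (M : ℝ) ^ (1 - 2 * a) := by
        rw [← Real.rpow_add hM0]; ring_nf
      rw [mul_add ((1 / 2 : ℝ) ^ (-1 + a))]
      nth_rw 2 [z2]
      rw [z1]
      ring
    _ ≤ (1 / 2) ^ (-(2 * a)) * (1 / a) * ((M : ℝ) ^ (-e) * (1 + Real.log M)) +
        (1 / 2) ^ (-1 + a) * ((M : ℝ) ^ (-e) + (M : ℝ) ^ (-e)) * (1 + Real.log M) := by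
      gcongr
      have : (0 : ℝ) ≤ (M : ℝ) ^ (-e) := by positivity
      nlinarith
    _ = _ := by ring

lemma aux_sum_inj {α β : Type*} [DecidableEq β] (S : Finset α) (Q : Finset β) (i : α → β)
    (f : α → ℝ) (g : β → ℝ) (hi : ∀ a ∈ S, i a ∈ Q) (hinj : ∀ a ∈ S, ∀ b ∈ S, i a = i b → a = b)
    (hf : ∀ a ∈ S, f a ≤ g (i a)) (hg : ∀ q ∈ Q, 0 ≤ g q) : ∑ a ∈ S, f a ≤ ∑ q ∈ Q, g q := by
  calc ∑ a ∈ S, f a ≤ ∑ a ∈ S, g (i a) := Finset.sum_le_sum hf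
    _ = ∑ q ∈ S.image i, g q := by
      rw [Finset.sum_image]
      intro a ha b hb h
      exact hinj a ha b hb h
    _ ≤ _ := by
      apply Finset.sum_le_sum_of_subset_of_nonneg
      · intro q hq
        rw [Finset.mem_image] at hq
        obtain ⟨a, ha, rfl⟩ := hq
        exact hi a ha
      · intro q hq _; exact hg q hq

lemma aux_sum_pos (r n : ℕ) (hr : 1 ≤ r) (ω : Finset ℕ) (h : ω ∈ powersetCard r (Icc 1 n)) :
    1 ≤ ω.sum id := by
  rw [Finset.mem_powersetCard] at h
  have hne : ω.Nonempty := by rw [← Finset.card_pos]; omega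
  obtain ⟨x, hx⟩ := hne
  have h1 := h.1 hx
  rw [Finset.mem_Icc] at h1
  have := Finset.single_le_sum (f := id) (fun i _ => Nat.zero_le _) hx
  simp only [id] at this ⊢
  omega

lemma aux_G (s : ℕ) (hs : 2 ≤ s) (r : ℕ) (hr : 1 ≤ r) : r < s →
    ∃ C : ℝ, 0 ≤ C ∧ ∀ n M : ℕ,
      ∑ ω ∈ (powersetCard r (Icc 1 n)).filter (fun ω => ω.sum id = M),
        ∏ x ∈ ω, (x : ℝ) ^ (-1 + 1 / (s : ℝ)) ≤ C * (M : ℝ) ^ (-1 + (r : ℝ) / s) := by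
  have hs0 : (0 : ℝ) < s := by positivity
  induction r, hr using Nat.le_induction with
  | base =>
    intro _
    refine ⟨1, by norm_num, fun n M => ?_⟩
    have := aux_sum_inj ((powersetCard 1 (Icc 1 n)).filter (fun ω => ω.sum id = M)) {M}
      (fun ω => ω.sum id) (fun ω => ∏ x ∈ ω, (x : ℝ) ^ (-1 + 1 / (s : ℝ)))
      (fun M => (M : ℝ) ^ (-1 + 1 / (s : ℝ))) ?_ ?_ ?_ ?_
    · simpa using this
    · intro ω hω; simp at hω ⊢; exact hω.2
    · intro a ha b hb h
      simp only [Finset.mem_filter, Finset.mem_powersetCard, Finset.card_eq_one] at ha hb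
      obtain ⟨⟨_, x, rfl⟩, _⟩ := ha
      obtain ⟨⟨_, y, rfl⟩, _⟩ := hb
      simpa using h
    · intro a ha
      simp only [Finset.mem_filter, Finset.mem_powersetCard, Finset.card_eq_one] at ha
      obtain ⟨⟨_, x, rfl⟩, _⟩ := ha
      simp
    · intros; positivity
  | succ r hr ih =>
    intro hrs
    obtain ⟨C, hC, hG⟩ := ih (by omega)
    have hr0 : (0 : ℝ) < r := by exact_mod_cast hr
    have hrs' : (r : ℝ) < s := by exact_mod_cast (by omega : r < s)
    have hs1 : (1 : ℝ) < s := by exact_mod_cast hs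
    obtain ⟨D, hD, hconv⟩ := aux_conv1 (1 / (s : ℝ)) ((r : ℝ) / s) (by positivity)
      (by rw [div_lt_one hs0]; exact hs1) (by positivity) (by rw [div_lt_one hs0]; exact hrs')
    refine ⟨C * D, by positivity, fun n M => ?_⟩
    have key := aux_sum_inj ((powersetCard (r + 1) (Icc 1 n)).filter (fun ω => ω.sum id = M))
      ((range M ×ˢ powersetCard r (Icc 1 n)).filter (fun q => q.2.sum id = M - q.1))
      (fun ω => (ω.sup id, ω.erase (ω.sup id))) (fun ω => ∏ x ∈ ω, (x : ℝ) ^ (-1 + 1 / (s : ℝ)))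
      (fun q => (q.1 : ℝ) ^ (-1 + 1 / (s : ℝ)) * ∏ x ∈ q.2, (x : ℝ) ^ (-1 + 1 / (s : ℝ)))
      ?_ ?_ ?_ ?_
    · refine key.trans ?_
      rw [Finset.sum_filter, Finset.sum_product]
      calc _ ≤ ∑ x ∈ range M, (x : ℝ) ^ (-1 + 1 / (s : ℝ)) *
            (C * ((M - x : ℕ) : ℝ) ^ (-1 + (r : ℝ) / s)) := by
            apply Finset.sum_le_sum
            intro x _
            rw [← Finset.sum_filter]
            dsimp only
            rw [← Finset.mul_sum]
            exact mul_le_mul_of_nonneg_left (hG n (M - x)) (by positivity)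
        _ = C * ∑ x ∈ range M, (x : ℝ) ^ (-1 + 1 / (s : ℝ)) *
            ((M - x : ℕ) : ℝ) ^ (-1 + (r : ℝ) / s) := by
            rw [Finset.mul_sum]; apply Finset.sum_congr rfl; intros; ring
        _ ≤ C * (D * (M : ℝ) ^ (-1 + (1 / (s : ℝ) + (r : ℝ) / s))) := by
            gcongr; exact hconv M
        _ = _ := by
            rw [show 1 / (s : ℝ) + (r : ℝ) / s = ((r + 1 : ℕ) : ℝ) / s by push_cast; ring]; ring
    all_goals
      have hsup : ∀ ω ∈ (powersetCard (r + 1) (Icc 1 n)).filter (fun ω => ω.sum id = M),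
          ω.sup id ∈ ω := by
        intro ω hω
        simp only [Finset.mem_filter, Finset.mem_powersetCard] at hω
        obtain ⟨x, hx, h⟩ := Finset.exists_mem_eq_sup ω
          (by rw [← Finset.card_pos]; omega) id
        rw [h]; exact hx
    · intro ω hω
      have h1 := hsup ω hω
      simp only [Finset.mem_filter, Finset.mem_powersetCard] at hω
      have h2 : ω.erase (ω.sup id) ∈ powersetCard r (Icc 1 n) := by
        rw [Finset.mem_powersetCard, Finset.card_erase_of_mem h1]
        exact ⟨(Finset.erase_subset _ _).trans hω.1.1, by omega⟩
      have h3 := aux_sum_pos r n hr _ h2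
      have h4 := Finset.add_sum_erase ω id h1
      simp only [Finset.mem_filter, Finset.mem_product, Finset.mem_range]
      simp only [id] at h4 h3 ⊢
      have h5 := hω.2
      simp only [id] at h5
      refine ⟨⟨by omega, h2⟩, by omega⟩
    · intro a ha b hb h
      have h1 := hsup a ha
      have h2 := hsup b hb
      simp only [Prod.mk.injEq] at h
      rw [← Finset.insert_erase h1, ← Finset.insert_erase h2, h.2, h.1]
    · intro ω hω
      have h1 := hsup ω hω
      exact (Finset.mul_prod_erase ω (fun x : ℕ => (x : ℝ) ^ (-1 + 1 / (s : ℝ))) h1).ge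
    · intro q _
      have : 0 ≤ ∏ x ∈ q.2, (x : ℝ) ^ (-1 + 1 / (s : ℝ)) :=
        Finset.prod_nonneg (fun _ _ => by positivity)
      positivity

lemma aux_H (s : ℕ) (hs : 2 ≤ s) (k : ℕ) (hk : 1 ≤ k) (hks : k < s) :
    ∃ C : ℝ, 0 ≤ C ∧ ∀ n N : ℕ, 1 ≤ N →
      ∑ ω ∈ powersetCard k (Icc 1 n),
        (∏ x ∈ ω, (x : ℝ) ^ (-1 + 1 / (s : ℝ))) *
          (((N - ω.sum id : ℕ) : ℝ) ^ (-((k : ℝ) / s))) ^ 2 ≤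
        C * ((N : ℝ) ^ (-(1 / (s : ℝ))) * (1 + Real.log N)) := by
  have hs0 : (0 : ℝ) < s := by positivity
  have hk0 : (1 : ℝ) ≤ k := by exact_mod_cast hk
  have hks' : (k : ℝ) + 1 ≤ s := by exact_mod_cast hks
  obtain ⟨C, hC, hG⟩ := aux_G s hs k hk hks
  obtain ⟨D, hD, hconv⟩ := aux_conv2 ((k : ℝ) / s) (1 / s) (by positivity) (by gcongr)
    (by rw [le_sub_iff_add_le, ← add_div, div_le_one hs0]; exact hks')
  refine ⟨C * D, by positivity, fun n N hN => ?_⟩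
  have hne : -((k : ℝ) / s) ≠ 0 := by
    have : 0 < (k : ℝ) / s := by positivity
    linarith
  calc _ = ∑ ω ∈ (powersetCard k (Icc 1 n)).filter (fun ω => ω.sum id < N),
        (∏ x ∈ ω, (x : ℝ) ^ (-1 + 1 / (s : ℝ))) *
          (((N - ω.sum id : ℕ) : ℝ) ^ (-((k : ℝ) / s))) ^ 2 := by
        symm
        apply Finset.sum_filter_of_ne
        intro ω _ h
        by_contra h'
        apply h
        rw [Nat.sub_eq_zero_of_le (by omega)]
        simp [Real.zero_rpow hne]
    _ = ∑ t ∈ range N, ∑ ω ∈ ((powersetCard k (Icc 1 n)).filter (fun ω => ω.sum id < N)).filter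
          (fun ω => ω.sum id = t), (∏ x ∈ ω, (x : ℝ) ^ (-1 + 1 / (s : ℝ))) *
          (((N - ω.sum id : ℕ) : ℝ) ^ (-((k : ℝ) / s))) ^ 2 := by
        symm
        apply Finset.sum_fiberwise_of_maps_to
        intro ω h
        rw [Finset.mem_filter] at h
        exact Finset.mem_range.2 h.2
    _ ≤ ∑ t ∈ range N, (C * (t : ℝ) ^ (-1 + (k : ℝ) / s)) *
          (((N - t : ℕ) : ℝ) ^ (-((k : ℝ) / s))) ^ 2 := by
        apply Finset.sum_le_sum
        intro t ht
        rw [Finset.mem_range] at ht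
        have : ((powersetCard k (Icc 1 n)).filter (fun ω => ω.sum id < N)).filter
          (fun ω => ω.sum id = t) = (powersetCard k (Icc 1 n)).filter (fun ω => ω.sum id = t) := by
          rw [Finset.filter_filter]
          apply Finset.filter_congr
          intro ω _
          constructor
          · exact fun h => h.2
          · intro h; exact ⟨by omega, h⟩
        rw [this]
        have e : ∀ ω ∈ (powersetCard k (Icc 1 n)).filter (fun ω => ω.sum id = t),
          (∏ x ∈ ω, (x : ℝ) ^ (-1 + 1 / (s : ℝ))) *
          (((N - ω.sum id : ℕ) : ℝ) ^ (-((k : ℝ) / s))) ^ 2 =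
          (∏ x ∈ ω, (x : ℝ) ^ (-1 + 1 / (s : ℝ))) *
          (((N - t : ℕ) : ℝ) ^ (-((k : ℝ) / s))) ^ 2 := by
          intro ω h
          rw [Finset.mem_filter] at h
          rw [h.2]
        rw [Finset.sum_congr rfl e, ← Finset.sum_mul]
        exact mul_le_mul_of_nonneg_right (hG n t) (by positivity)
    _ = C * ∑ t ∈ range N, ((t : ℝ) ^ (-1 + (k : ℝ) / s)) *
          (((N - t : ℕ) : ℝ) ^ (-((k : ℝ) / s))) ^ 2 := by
        rw [Finset.mul_sum]; apply Finset.sum_congr rfl; intros; ring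
    _ ≤ C * (D * ((N : ℝ) ^ (-(1 / (s : ℝ))) * (1 + Real.log N))) := by
        gcongr; exact hconv N hN
    _ = _ := by ring

lemma aux_K (s : ℕ) (hs : 2 ≤ s) (k : ℕ) (hk : 1 ≤ k) (hks : k < s) :
    ∃ C : ℝ, 0 ≤ C ∧ ∀ n N N' : ℕ, 1 ≤ N → 1 ≤ N' →
      ∑ p ∈ (powersetCard s (Icc 1 n) ×ˢ powersetCard s (Icc 1 n)).filter
          (fun p => p.1.sum id = N ∧ p.2.sum id = N' ∧ (p.1 ∩ p.2).card = k),
        ∏ x ∈ p.1 ∪ p.2, (x : ℝ) ^ (-1 + 1 / (s : ℝ)) ≤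
        C * ((N : ℝ) ^ (-(1 / (s : ℝ))) * (1 + Real.log N) +
          (N' : ℝ) ^ (-(1 / (s : ℝ))) * (1 + Real.log N')) := by
  have hs0 : (0 : ℝ) < s := by positivity
  obtain ⟨C, hC, hG⟩ := aux_G s hs (s - k) (by omega) (by omega)
  obtain ⟨D, hD, hH⟩ := aux_H s hs k hk hks
  have hexp : -1 + ((s - k : ℕ) : ℝ) / s = -((k : ℝ) / s) := by
    rw [Nat.cast_sub hks.le]; field_simp; ring
  rw [hexp] at hG
  set w : ℕ → ℝ := fun x => (x : ℝ) ^ (-1 + 1 / (s : ℝ)) with hw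
  have hw0 : ∀ x, 0 ≤ w x := fun x => by simp only [hw]; positivity
  have hP0 : ∀ η : Finset ℕ, 0 ≤ ∏ x ∈ η, w x := fun η => Finset.prod_nonneg (fun x _ => hw0 x)
  refine ⟨C ^ 2 * D, by positivity, fun n N N' hN hN' => ?_⟩
  set P := powersetCard k (Icc 1 n) with hP
  set R := powersetCard (s - k) (Icc 1 n) with hR
  have key := aux_sum_inj ((powersetCard s (Icc 1 n) ×ˢ powersetCard s (Icc 1 n)).filter
          (fun p => p.1.sum id = N ∧ p.2.sum id = N' ∧ (p.1 ∩ p.2).card = k))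
      ((P ×ˢ (R ×ˢ R)).filter (fun q => q.2.1.sum id = N - q.1.sum id ∧
        q.2.2.sum id = N' - q.1.sum id))
      (fun p => (p.1 ∩ p.2, (p.1 \ p.2, p.2 \ p.1)))
      (fun p => ∏ x ∈ p.1 ∪ p.2, w x)
      (fun q => (∏ x ∈ q.1, w x) * ((∏ x ∈ q.2.1, w x) * (∏ x ∈ q.2.2, w x)))
      ?_ ?_ ?_ ?_
  · refine key.trans ?_
    rw [Finset.sum_filter, Finset.sum_product]
    have inner : ∀ κ ∈ P, (∑ y ∈ R ×ˢ R, if y.1.sum id = N - κ.sum id ∧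
        y.2.sum id = N' - κ.sum id then (∏ x ∈ κ, w x) * ((∏ x ∈ y.1, w x) * (∏ x ∈ y.2, w x))
          else 0) ≤ C ^ 2 * ((∏ x ∈ κ, w x) * (((N - κ.sum id : ℕ) : ℝ) ^ (-((k : ℝ) / s))) ^ 2 +
            (∏ x ∈ κ, w x) * (((N' - κ.sum id : ℕ) : ℝ) ^ (-((k : ℝ) / s))) ^ 2) := by
      intro κ _
      have g1 := hG n (N - κ.sum id)
      have g2 := hG n (N' - κ.sum id)
      set u := ((N - κ.sum id : ℕ) : ℝ) ^ (-((k : ℝ) / s)) with hu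
      set v := ((N' - κ.sum id : ℕ) : ℝ) ^ (-((k : ℝ) / s)) with hv
      have hu0 : 0 ≤ u := by positivity
      have hv0 : 0 ≤ v := by positivity
      rw [← Finset.sum_filter, ← Finset.mul_sum, 
        Finset.filter_product (fun y : Finset ℕ => y.sum id = N - κ.sum id)
          (fun y : Finset ℕ => y.sum id = N' - κ.sum id), Finset.sum_product]
      dsimp only
      rw [← Finset.sum_mul_sum]
      have hb : 0 ≤ ∑ ω ∈ R.filter (fun ω => ω.sum id = N' - κ.sum id), ∏ x ∈ ω, w x :=
        Finset.sum_nonneg (fun ω _ => hP0 ω)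
      calc _ ≤ (∏ x ∈ κ, w x) * ((C * u) * (C * v)) :=
            mul_le_mul_of_nonneg_left (mul_le_mul g1 g2 hb (by positivity)) (hP0 κ)
        _ = (C ^ 2 * (∏ x ∈ κ, w x)) * (u * v) := by ring
        _ ≤ (C ^ 2 * (∏ x ∈ κ, w x)) * (u ^ 2 + v ^ 2) :=
            mul_le_mul_of_nonneg_left (by nlinarith [sq_nonneg (u - v), sq_nonneg u, sq_nonneg v])
              (mul_nonneg (by positivity) (hP0 κ))
        _ = _ := by ring
    refine (Finset.sum_le_sum inner).trans ?_
    rw [← Finset.mul_sum, Finset.sum_add_distrib]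
    have h1 := hH n N hN
    have h2 := hH n N' hN'
    calc _ ≤ C ^ 2 * (D * ((N : ℝ) ^ (-(1 / (s : ℝ))) * (1 + Real.log N)) +
          D * ((N' : ℝ) ^ (-(1 / (s : ℝ))) * (1 + Real.log N'))) := by
          apply mul_le_mul_of_nonneg_left _ (by positivity)
          exact add_le_add h1 h2
      _ = _ := by ring
  · intro p hp
    simp only [Finset.mem_filter, Finset.mem_product, Finset.mem_powersetCard, hP, hR] at hp ⊢
    obtain ⟨⟨⟨a1, a2⟩, b1, b2⟩, c1, c2, c3⟩ := hp
    have d1 := Finset.card_sdiff_add_card_inter p.1 p.2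
    have d2 := Finset.card_sdiff_add_card_inter p.2 p.1
    rw [Finset.inter_comm] at d2
    have e1 : (p.1 ∩ p.2).sum id + (p.1 \ p.2).sum id = p.1.sum id := Finset.sum_inter_add_sum_sdiff p.1 p.2 id
    have e2 : (p.2 ∩ p.1).sum id + (p.2 \ p.1).sum id = p.2.sum id := Finset.sum_inter_add_sum_sdiff p.2 p.1 id
    rw [Finset.inter_comm p.2 p.1] at e2
    refine ⟨⟨⟨?_, c3⟩, ⟨?_, by omega⟩, ⟨?_, by omega⟩⟩, by omega, by omega⟩
    · exact Finset.inter_subset_left.trans a1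
    · exact Finset.sdiff_subset.trans a1
    · exact Finset.sdiff_subset.trans b1
  · intro p _ q _ h
    simp only [Prod.mk.injEq] at h
    obtain ⟨h1, h2, h3⟩ := h
    apply Prod.ext
    · rw [← Finset.sdiff_union_inter p.1 p.2, ← Finset.sdiff_union_inter q.1 q.2, h1, h2]
    · rw [← Finset.sdiff_union_inter p.2 p.1, ← Finset.sdiff_union_inter q.2 q.1,
        Finset.inter_comm p.2, Finset.inter_comm q.2, h1, h3]
  · intro p _
    apply le_of_eq
    have h1 : p.1 ∪ p.2 = p.1 ∪ (p.2 \ p.1) := by simp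
    simp only
    rw [h1, Finset.prod_union Finset.disjoint_sdiff,
      ← Finset.prod_inter_mul_prod_sdiff p.1 p.2 w]
    ring
  · intro q _
    exact mul_nonneg (hP0 _) (mul_nonneg (hP0 _) (hP0 _))

lemma aux_lambda_pos (s : ℕ) (hs : 2 ≤ s) : 0 < lambdaS s := by
  unfold lambdaS
  have : 0 < Real.Gamma (1 / s) := Real.Gamma_pos_of_pos (by positivity)
  positivity

lemma aux_countB_mono (B : Set ℕ) {a b : ℕ} (h : a ≤ b) : countB B a ≤ countB B b := by
  unfold countB
  apply Set.ncard_le_ncard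
  · exact Set.inter_subset_inter_right _ (Set.Icc_subset_Icc_right h)
  · exact (Set.finite_Icc 1 b).inter_of_right B

lemma aux_m (c c' : ℝ) (hc' : 0 < c') (hcc : c' < c)
    (B : Set ℕ) (hBpos : ∀ b ∈ B, 1 ≤ b)
    (hB : ∀ ε : ℝ, 0 < ε → ∀ᶠ n : ℕ in Filter.atTop,
      (1 - ε) * (c * Real.log n) ≤ (countB B n : ℝ))
    (m : ℕ → ℕ)
    (hm : ∀ n : ℕ, 2 ≤ n →
      1 ≤ m n ∧ countB B (m n) = ⌊c' * Real.log n⌋₊ ∧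
        ∀ k : ℕ, 1 ≤ k → countB B k = ⌊c' * Real.log n⌋₊ → m n ≤ k) :
    ∃ K : ℕ, 1 ≤ K ∧ ∀ n : ℕ, 2 ≤ n → ∀ b ∈ B, b < m n → b < n → n ≤ K * (n - b) := by
  have hc : 0 < c := by linarith
  set d := (c + c') / 2 with hd
  have hd0 : 0 < d := by positivity
  have h1 := hB (1 - d / c) (by rw [sub_pos, div_lt_one hc]; linarith)
  have h1' : ∀ᶠ n : ℕ in Filter.atTop, d * Real.log n ≤ (countB B n : ℝ) := by
    filter_upwards [h1] with n hn
    have : (1 - (1 - d / c)) * (c * Real.log n) = d * Real.log n := by field_simp; ring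
    linarith
  rw [Filter.eventually_atTop] at h1'
  obtain ⟨j, hj⟩ := h1'
  have hδ : 0 < 1 - c' / d := by rw [sub_pos, div_lt_one hd0]; linarith
  have h2 := ((tendsto_rpow_atTop hδ).comp tendsto_natCast_atTop_atTop).eventually_ge_atTop (2 : ℝ)
  rw [Filter.eventually_atTop] at h2
  obtain ⟨n1, hn1⟩ := h2
  refine ⟨2 + 2 * j + n1, by omega, fun n hn b hb hbm hbn => ?_⟩
  by_cases hlarge : 2 * j ≤ n ∧ n1 ≤ n
  · have h2b : 2 * b ≤ n := by
      by_cases hbj : b < j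
      · omega
      · have hb1 := hBpos b hb
        obtain ⟨_, m2, m3⟩ := hm n hn
        have hle : countB B b ≤ ⌊c' * Real.log n⌋₊ := by
          rw [← m2]; exact aux_countB_mono B hbm.le
        have hn0 : (0 : ℝ) < n := by positivity
        have hb0 : (0 : ℝ) < b := by exact_mod_cast hb1
        have hlog : 0 ≤ Real.log n := Real.log_nonneg (by exact_mod_cast (by omega : 1 ≤ n))
        have h3 : d * Real.log b ≤ c' * Real.log n := by
          refine (hj b (by omega)).trans ?_
          refine le_trans ?_ (Nat.floor_le (by positivity : 0 ≤ c' * Real.log n))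
          exact_mod_cast hle
        have h4 : (b : ℝ) ≤ (n : ℝ) ^ (c' / d) := by
          rw [← Real.log_le_log_iff hb0 (by positivity), Real.log_rpow hn0, div_mul_eq_mul_div,
            le_div_iff₀ hd0]
          linarith
        have h5 : (2 : ℝ) ≤ (n : ℝ) ^ (1 - c' / d) := hn1 n hlarge.2
        have h6 : (n : ℝ) ^ (c' / d) * (n : ℝ) ^ (1 - c' / d) = n := by
          rw [← Real.rpow_add hn0]; simp
        have h7 : (2 * b : ℝ) ≤ n := by nlinarith
        exact_mod_cast h7
    calc n ≤ 2 * (n - b) := by omega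
      _ ≤ _ := Nat.mul_le_mul_right _ (by omega)
  · calc n ≤ (2 + 2 * j + n1) * 1 := by omega
      _ ≤ _ := Nat.mul_le_mul_left _ (by omega)

/-- Lemma 7 (Lemma `BB456`): with `Ω_n` the family of `s`-element sets `ω` of positive
integers with `n - σ(ω) ∈ B` and `n - σ(ω) < m(n)`, the correlation sum
`Σ_{ω ≠ ω' ∈ Ω_n, ω ∩ ω' ≠ ∅} s^{-|ω ∪ ω'|} ∏_{x ∈ ω ∪ ω'} x^{-1+1/s}` is
`≪ n^{-1/s} (log n)^3`. -/
theorem stmt_12 (s : ℕ) (hs : 2 ≤ s) (c : ℝ) (hc : (lambdaS s)⁻¹ < c)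
    (B : Set ℕ) [DecidablePred (· ∈ B)] (hBpos : ∀ b ∈ B, 1 ≤ b) (hBinf : B.Infinite)
    (hB : ∀ ε : ℝ, 0 < ε → ∀ᶠ n : ℕ in Filter.atTop,
      (1 - ε) * (c * Real.log n) ≤ (countB B n : ℝ))
    (m : ℕ → ℕ)
    (hm : ∀ n : ℕ, 2 ≤ n →
      1 ≤ m n ∧ countB B (m n) = ⌊((c + (lambdaS s)⁻¹) / 2) * Real.log n⌋₊ ∧
        ∀ k : ℕ, 1 ≤ k → countB B k = ⌊((c + (lambdaS s)⁻¹) / 2) * Real.log n⌋₊ → m n ≤ k) :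
    ∃ C : ℝ, 0 < C ∧ ∀ n : ℕ, 2 ≤ n →
      ∑ p ∈ (((Finset.powersetCard s (Finset.Icc 1 n)).filter
              (fun ω : Finset ℕ => n - ω.sum id ∈ B ∧ n - ω.sum id < m n)) ×ˢ
            ((Finset.powersetCard s (Finset.Icc 1 n)).filter
              (fun ω : Finset ℕ => n - ω.sum id ∈ B ∧ n - ω.sum id < m n))).filter
          (fun p : Finset ℕ × Finset ℕ => p.1 ≠ p.2 ∧ (p.1 ∩ p.2).Nonempty),
        ((s : ℝ) ^ (p.1 ∪ p.2).card)⁻¹ * ∏ x ∈ p.1 ∪ p.2, (x : ℝ) ^ (-1 + 1 / (s : ℝ)) ≤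
      C * (n : ℝ) ^ (-(1 : ℝ) / s) * (Real.log n) ^ 3 := by
  classical
  have hs0 : (0 : ℝ) < s := by positivity
  have hl := aux_lambda_pos s hs
  set c' := (c + (lambdaS s)⁻¹) / 2 with hc'
  have hli : 0 < (lambdaS s)⁻¹ := by positivity
  have hc'0 : 0 < c' := by rw [hc']; linarith
  obtain ⟨K, hK1, hK⟩ := aux_m c c' hc'0 (by rw [hc']; linarith) B hBpos hB m hm
  have hex : ∀ k : ℕ, ∃ C : ℝ, 0 ≤ C ∧ (k ∈ Icc 1 (s - 1) → ∀ n N N' : ℕ, 1 ≤ N → 1 ≤ N' →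
      ∑ p ∈ (powersetCard s (Icc 1 n) ×ˢ powersetCard s (Icc 1 n)).filter
          (fun p => p.1.sum id = N ∧ p.2.sum id = N' ∧ (p.1 ∩ p.2).card = k),
        ∏ x ∈ p.1 ∪ p.2, (x : ℝ) ^ (-1 + 1 / (s : ℝ)) ≤
        C * ((N : ℝ) ^ (-(1 / (s : ℝ))) * (1 + Real.log N) +
          (N' : ℝ) ^ (-(1 / (s : ℝ))) * (1 + Real.log N'))) := by
    intro k
    by_cases hk : k ∈ Icc 1 (s - 1)
    · rw [Finset.mem_Icc] at hk
      obtain ⟨C, hC, h⟩ := aux_K s hs k hk.1 (by omega)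
      exact ⟨C, hC, fun _ => h⟩
    · exact ⟨0, le_rfl, fun h => absurd h hk⟩
  choose C hC hCK using hex
  set A : ℝ := (K : ℝ) ^ (1 / (s : ℝ)) * (1 / Real.log 2 + 1) with hA
  have hlog2 : 0 < Real.log 2 := Real.log_pos (by norm_num)
  have hK0 : (0 : ℝ) < K := by exact_mod_cast hK1
  have hA0 : 0 < A := by positivity
  set D : ℝ := ∑ k ∈ Icc 1 (s - 1), C k with hD
  have hD0 : 0 ≤ D := Finset.sum_nonneg (fun k _ => hC k)
  refine ⟨D * (2 * A) * c' ^ 2 + 1, by positivity, fun n hn => ?_⟩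
  have hn0 : (0 : ℝ) < n := by positivity
  have hn2 : (2 : ℝ) ≤ n := by exact_mod_cast hn
  have hlogn : Real.log 2 ≤ Real.log n := Real.log_le_log (by norm_num) hn2
  have hlogn0 : 0 < Real.log n := by linarith
  set w : ℕ → ℝ := fun x => (x : ℝ) ^ (-1 + 1 / (s : ℝ)) with hw
  have hP0 : ∀ η : Finset ℕ, 0 ≤ ∏ x ∈ η, w x :=
    fun η => Finset.prod_nonneg (fun x _ => by simp only [hw]; positivity)
  set O := (Finset.powersetCard s (Finset.Icc 1 n)).filter
              (fun ω : Finset ℕ => n - ω.sum id ∈ B ∧ n - ω.sum id < m n) with hO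
  set S := (O ×ˢ O).filter
          (fun p : Finset ℕ × Finset ℕ => p.1 ≠ p.2 ∧ (p.1 ∩ p.2).Nonempty) with hS
  set Bs := (Finset.range n).filter (fun b => b ∈ B ∧ b < m n) with hBs
  set X : ℝ := (n : ℝ) ^ (-(1 : ℝ) / s) * Real.log n with hX
  have hX0 : 0 ≤ X := by positivity
  have hcard : (Bs.card : ℝ) ≤ c' * Real.log n := by
    refine le_trans ?_ (Nat.floor_le (by positivity : 0 ≤ c' * Real.log n))
    rw [← (hm n hn).2.1]
    unfold countB
    rw [← Set.ncard_coe_finset]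
    rw [Nat.cast_le]
    apply Set.ncard_le_ncard
    · intro b hb
      simp only [hBs, Finset.coe_filter, Set.mem_setOf_eq] at hb
      exact ⟨hb.2.1, hBpos b hb.2.1, hb.2.2.le⟩
    · exact (Set.finite_Icc 1 (m n)).inter_of_right B
  have hNb : ∀ b ∈ Bs, 1 ≤ n - b ∧
      ((n - b : ℕ) : ℝ) ^ (-(1 / (s : ℝ))) * (1 + Real.log ((n - b : ℕ) : ℝ)) ≤ A * X := by
    intro b hb
    simp only [hBs, Finset.mem_filter, Finset.mem_range] at hb
    have h1 := hK n hn b hb.2.1 hb.2.2 hb.1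
    have h2 : 1 ≤ n - b := by omega
    refine ⟨h2, ?_⟩
    set N := n - b with hN
    have hN0 : (0 : ℝ) < N := by exact_mod_cast h2
    have hNn : (N : ℝ) ≤ n := by exact_mod_cast (by omega : N ≤ n)
    have h1' : (n : ℝ) ≤ K * N := by exact_mod_cast h1
    have e1 : (N : ℝ) ^ (-(1 / (s : ℝ))) ≤ (K : ℝ) ^ (1 / (s : ℝ)) * (n : ℝ) ^ (-(1 : ℝ) / s) := by
      have h3 : ((K : ℝ) * N) ^ (-(1 / (s : ℝ))) ≤ (n : ℝ) ^ (-(1 / (s : ℝ))) :=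
        Real.rpow_le_rpow_of_nonpos hn0 h1' (by have : 0 < 1 / (s : ℝ) := by positivity
                                                linarith)
      rw [Real.mul_rpow hK0.le hN0.le] at h3
      have h4 : (K : ℝ) ^ (1 / (s : ℝ)) * (K : ℝ) ^ (-(1 / (s : ℝ))) = 1 := by
        rw [← Real.rpow_add hK0]; simp
      rw [neg_div]
      calc (N : ℝ) ^ (-(1 / (s : ℝ))) =
          (K : ℝ) ^ (1 / (s : ℝ)) * ((K : ℝ) ^ (-(1 / (s : ℝ))) * (N : ℝ) ^ (-(1 / (s : ℝ)))) := by
            rw [← mul_assoc, h4, one_mul]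
        _ ≤ _ := by gcongr
    have e2 : 1 + Real.log N ≤ (1 / Real.log 2 + 1) * Real.log n := by
      have h5 : Real.log N ≤ Real.log n := Real.log_le_log hN0 hNn
      have h6 : 1 ≤ (1 / Real.log 2) * Real.log n := by
        rw [one_div_mul_eq_div, le_div_iff₀ hlog2]; linarith
      linarith
    have e3 : 0 ≤ 1 + Real.log N := by
      have := Real.log_nonneg (by exact_mod_cast h2 : (1 : ℝ) ≤ N)
      linarith
    calc _ ≤ ((K : ℝ) ^ (1 / (s : ℝ)) * (n : ℝ) ^ (-(1 : ℝ) / s)) *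
          ((1 / Real.log 2 + 1) * Real.log n) := by gcongr
      _ = A * X := by rw [hA, hX]; ring
  have step1 : ∑ p ∈ S, ((s : ℝ) ^ (p.1 ∪ p.2).card)⁻¹ * ∏ x ∈ p.1 ∪ p.2, w x ≤
      ∑ p ∈ S, ∏ x ∈ p.1 ∪ p.2, w x := by
    apply Finset.sum_le_sum
    intro p _
    apply mul_le_of_le_one_left (hP0 _)
    apply inv_le_one_of_one_le₀
    apply one_le_pow₀
    exact_mod_cast (by omega : 1 ≤ s)
  have hOmem : ∀ ω ∈ O, ω ∈ powersetCard s (Icc 1 n) ∧ n - ω.sum id ∈ Bs ∧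
      ω.sum id = n - (n - ω.sum id) := by
    intro ω h
    rw [hO, Finset.mem_filter] at h
    have h1 := hBpos _ h.2.1
    have h2 := aux_sum_pos s n (by omega) ω h.1
    refine ⟨h.1, ?_, by omega⟩
    rw [hBs, Finset.mem_filter, Finset.mem_range]
    exact ⟨by omega, h.2⟩
  have hSmem : ∀ p ∈ S, ((p.1 ∩ p.2).card, (n - p.1.sum id, n - p.2.sum id)) ∈
      Icc 1 (s - 1) ×ˢ (Bs ×ˢ Bs) := by
    intro p hp
    rw [hS, Finset.mem_filter, Finset.mem_product] at hp
    obtain ⟨⟨h1, h2⟩, h3, h4⟩ := hp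
    obtain ⟨a1, a2, _⟩ := hOmem _ h1
    obtain ⟨b1, b2, _⟩ := hOmem _ h2
    rw [Finset.mem_powersetCard] at a1 b1
    simp only [Finset.mem_product, Finset.mem_Icc]
    refine ⟨⟨Finset.card_pos.2 h4, ?_⟩, a2, b2⟩
    have h5 : (p.1 ∩ p.2).card ≤ s := by
      rw [← a1.2]; exact Finset.card_le_card Finset.inter_subset_left
    have h6 : (p.1 ∩ p.2).card ≠ s := by
      intro h
      apply h3
      have i1 := Finset.eq_of_subset_of_card_le (Finset.inter_subset_left : p.1 ∩ p.2 ⊆ p.1)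
        (by omega)
      have i2 := Finset.eq_of_subset_of_card_le (Finset.inter_subset_right : p.1 ∩ p.2 ⊆ p.2)
        (by omega)
      rw [← i1]
      exact i2
    omega
  have step2 : ∑ p ∈ S, ∏ x ∈ p.1 ∪ p.2, w x ≤
      ∑ q ∈ Icc 1 (s - 1) ×ˢ (Bs ×ˢ Bs), C q.1 * (2 * A * X) := by
    rw [← Finset.sum_fiberwise_of_maps_to hSmem]
    apply Finset.sum_le_sum
    rintro ⟨k, b, b'⟩ hq
    simp only [Finset.mem_product] at hq
    obtain ⟨n1, n2⟩ := hNb b hq.2.1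
    obtain ⟨n3, n4⟩ := hNb b' hq.2.2
    have := hCK k hq.1 n (n - b) (n - b') n1 n3
    calc _ ≤ ∑ p ∈ (powersetCard s (Icc 1 n) ×ˢ powersetCard s (Icc 1 n)).filter
          (fun p => p.1.sum id = n - b ∧ p.2.sum id = n - b' ∧ (p.1 ∩ p.2).card = k),
          ∏ x ∈ p.1 ∪ p.2, w x := by
          apply Finset.sum_le_sum_of_subset_of_nonneg
          · intro p hp
            rw [Finset.mem_filter] at hp
            obtain ⟨hp, he⟩ := hp
            rw [hS, Finset.mem_filter, Finset.mem_product] at hp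
            obtain ⟨a1, a2, a3⟩ := hOmem _ hp.1.1
            obtain ⟨b1, b2, b3⟩ := hOmem _ hp.1.2
            simp only [Prod.mk.injEq] at he
            obtain ⟨rfl, rfl, rfl⟩ := he
            rw [Finset.mem_filter, Finset.mem_product]
            exact ⟨⟨a1, b1⟩, a3, b3, rfl⟩
          · intro p _ _; exact hP0 _
      _ ≤ _ := this
      _ ≤ C k * (A * X + A * X) := mul_le_mul_of_nonneg_left (add_le_add n2 n4) (hC k)
      _ = _ := by ring
  have step3 : ∑ q ∈ Icc 1 (s - 1) ×ˢ (Bs ×ˢ Bs), C q.1 * (2 * A * X) =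
      D * (2 * A) * (Bs.card : ℝ) ^ 2 * X := by
    rw [Finset.sum_product]
    simp only [Finset.sum_const, Finset.card_product, nsmul_eq_mul]
    rw [← Finset.mul_sum, ← Finset.sum_mul, ← hD]
    push_cast
    ring
  calc _ ≤ _ := step1
    _ ≤ _ := step2
    _ = _ := step3
    _ ≤ D * (2 * A) * (c' * Real.log n) ^ 2 * X := by gcongr
    _ = (D * (2 * A) * c' ^ 2) * (n : ℝ) ^ (-(1 : ℝ) / s) * Real.log n ^ 3 := by rw [hX]; ring
    _ ≤ _ := by gcongr; linarith
end

section
/- Let s ≥ 2 be an integer. Then, as n tends to infinity through the integers, the sum over all s-tuples of integers with 1 ≤ x_s < x_{s-1} < ⋯ < x_1 and x_1 + ⋯ + x_s = n of (x_1 ⋯ x_s)^{-1+1/s} equals s^s·λ_s + O(n^{-1/(s+1)}), with an implied constant depending only on s. -/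
open Finset

noncomputable def Wser (b : ℝ) : PowerSeries ℝ :=
  PowerSeries.rescale (-1 : ℝ) (PowerSeries.binomialSeries ℝ (-b))

lemma Wser_add (b c : ℝ) : Wser (b + c) = Wser b * Wser c := by
  unfold Wser
  rw [neg_add, PowerSeries.binomialSeries_add, map_mul]

lemma Wser_zero : Wser 0 = 1 := by
  unfold Wser
  simp

lemma Wser_pow (b : ℝ) (k : ℕ) : Wser b ^ k = Wser (k * b) := by
  induction k with
  | zero => simp [Wser_zero]
  | succ k ih => rw [pow_succ, ih, ← Wser_add]; push_cast; ring_nf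

lemma Wser_coeff (b : ℝ) (n : ℕ) : PowerSeries.coeff n (Wser b) = Ring.multichoose b n := by
  unfold Wser
  rw [PowerSeries.coeff_rescale, PowerSeries.binomialSeries_coeff, Ring.choose_neg,
    Ring.multichoose_eq, ← Int.cast_negOnePow_natCast]
  rcases Nat.even_or_odd n with h | h
  · simp [Int.negOnePow_even n (by exact_mod_cast h)]
  · simp [Int.negOnePow_odd n (by exact_mod_cast h)]

lemma Wser_one_coeff (n : ℕ) : PowerSeries.coeff n (Wser 1) = 1 := by
  rw [Wser_coeff, Ring.multichoose_one]

lemma Wser_coeff_gamma {b : ℝ} (hb : 0 < b) (n : ℕ) :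
    PowerSeries.coeff n (Wser b) * Real.Gamma b * n.factorial = Real.Gamma (n + b) := by
  have key : ∀ n : ℕ, (ascPochhammer ℝ n).eval b * Real.Gamma b = Real.Gamma (n + b) := by
    intro n
    induction n with
    | zero => simp
    | succ k ih =>
      rw [ascPochhammer_succ_eval]
      push_cast
      rw [show (k : ℝ) + 1 + b = (k + b) + 1 by ring, Real.Gamma_add_one (by positivity), ← ih]
      ring
  rw [← key, Wser_coeff, ← Polynomial.ascPochhammer_smeval_eq_eval,
    ← Ring.factorial_nsmul_multichoose_eq_ascPochhammer, nsmul_eq_mul]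
  ring

lemma Wser_upper {b : ℝ} (hb : 0 < b) (hb1 : b < 1) {n : ℕ} (hn : 1 ≤ n) :
    Real.Gamma b * PowerSeries.coeff n (Wser b) ≤ (n : ℝ) ^ (b - 1) := by
  have hn0 : (0 : ℝ) < n := by exact_mod_cast hn
  have h := Real.Gamma_mul_add_mul_le_rpow_Gamma_mul_rpow_Gamma (s := n) (t := n + 1)
    (a := 1 - b) (b := b) hn0 (by positivity) (by linarith) hb (by ring)
  rw [show (1 - b) * (n : ℝ) + b * (n + 1) = n + b by ring, Real.Gamma_add_one hn0.ne',
    Real.mul_rpow hn0.le (Real.Gamma_pos_of_pos hn0).le] at h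
  have hG := Real.Gamma_pos_of_pos hn0
  have e1 : Real.Gamma n ^ (1 - b) * ((n : ℝ) ^ b * Real.Gamma n ^ b) = n ^ b * Real.Gamma n := by
    calc _ = n ^ b * (Real.Gamma n ^ (1 - b) * Real.Gamma n ^ b) := by ring
      _ = _ := by rw [← Real.rpow_add hG]; simp
  rw [e1, ← Wser_coeff_gamma hb] at h
  have e2 : (n.factorial : ℝ) = n * Real.Gamma n := by
    rw [← Real.Gamma_add_one hn0.ne', Real.Gamma_nat_eq_factorial]
  rw [e2] at h
  rw [Real.rpow_sub_one hn0.ne', le_div_iff₀ hn0]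
  nlinarith

lemma Wser_lower {b : ℝ} (hb : 0 < b) (hb1 : b < 1) {n : ℕ} (hn : 1 ≤ n) :
    (n : ℝ) ^ b / (n + b) ≤ Real.Gamma b * PowerSeries.coeff n (Wser b) := by
  have hn0 : (0 : ℝ) < n := by exact_mod_cast hn
  have hnb : (0 : ℝ) < n + b := by positivity
  have h := Real.Gamma_mul_add_mul_le_rpow_Gamma_mul_rpow_Gamma (s := n + b) (t := n + b + 1)
    (a := b) (b := 1 - b) hnb (by positivity) hb (by linarith) (by ring)
  rw [show b * ((n : ℝ) + b) + (1 - b) * (n + b + 1) = n + 1 by ring, Real.Gamma_add_one hnb.ne',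
    Real.mul_rpow hnb.le (Real.Gamma_pos_of_pos hnb).le, Real.Gamma_nat_eq_factorial] at h
  have hG := Real.Gamma_pos_of_pos hnb
  have e1 : Real.Gamma (n + b) ^ b * ((n + b) ^ (1 - b) * Real.Gamma (n + b) ^ (1 - b))
      = (n + b) ^ (1 - b) * Real.Gamma (n + b) := by
    calc _ = (n + b) ^ (1 - b) * (Real.Gamma (n + b) ^ b * Real.Gamma (n + b) ^ (1 - b)) := by ring
      _ = _ := by rw [← Real.rpow_add hG]; simp
  rw [e1, ← Wser_coeff_gamma hb, Real.rpow_sub hnb, Real.rpow_one] at h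
  have hf : (0 : ℝ) < n.factorial := by positivity
  have h2 : 1 ≤ (n + b) / (n + b) ^ b * (PowerSeries.coeff n (Wser b) * Real.Gamma b) := by
    by_contra hc
    push Not at hc
    nlinarith
  have hp : (0 : ℝ) < (n + b) ^ b := by positivity
  rw [div_mul_eq_mul_div, le_div_iff₀ hp] at h2
  rw [div_le_iff₀ hnb]
  have := Real.rpow_le_rpow hn0.le (show (n : ℝ) ≤ n + b by linarith) hb.le
  nlinarith

lemma Wser_nonneg {b : ℝ} (hb : 0 ≤ b) (n : ℕ) : 0 ≤ PowerSeries.coeff n (Wser b) := by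
  rcases hb.eq_or_lt with rfl | hb
  · rw [Wser_zero, PowerSeries.coeff_one]; split_ifs <;> norm_num
  · have h := Wser_coeff_gamma hb n
    have h1 : 0 < Real.Gamma (n + b) := Real.Gamma_pos_of_pos (by positivity)
    have h2 := Real.Gamma_pos_of_pos hb
    rw [← h] at h1
    have hf : (0 : ℝ) < n.factorial := by positivity
    by_contra hc
    push Not at hc
    have : 0 < Real.Gamma b * n.factorial := by positivity
    nlinarith

/-- uniform upper bound -/
lemma Wser_bound {b : ℝ} (hb : 0 ≤ b) (hb1 : b < 1) : ∃ K : ℝ, 0 < K ∧ ∀ n : ℕ,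
    PowerSeries.coeff n (Wser b) ≤ K * ((n : ℝ) + 1) ^ (b - 1) := by
  rcases hb.eq_or_lt with rfl | hb
  · refine ⟨1, one_pos, fun n => ?_⟩
    rw [Wser_zero, PowerSeries.coeff_one]
    split_ifs with h
    · simp [h]
    · positivity
  · have hG := Real.Gamma_pos_of_pos hb
    refine ⟨1 + 2 / Real.Gamma b, by positivity, fun n => ?_⟩
    rcases Nat.eq_zero_or_pos n with rfl | hn
    · rw [Wser_coeff, Ring.multichoose_zero_right]
      simp
      positivity
    · have hn0 : (1 : ℝ) ≤ n := by exact_mod_cast hn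
      have h1 := Wser_upper hb hb1 hn
      have h2 : (n : ℝ) ^ (b - 1) ≤ 2 * ((n : ℝ) + 1) ^ (b - 1) := by
        rw [Real.rpow_sub_one (by positivity), Real.rpow_sub_one (by positivity),
          ← mul_div_assoc, div_le_div_iff₀ (by positivity) (by positivity)]
        have h3 : (n : ℝ) ^ b ≤ (n + 1) ^ b :=
          Real.rpow_le_rpow (by positivity) (by linarith) hb.le
        have h4 : 0 < (n : ℝ) ^ b := by positivity
        nlinarith
      have h5 : PowerSeries.coeff n (Wser b) ≤ 2 / Real.Gamma b * ((n : ℝ) + 1) ^ (b - 1) := by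
        rw [div_mul_eq_mul_div, le_div_iff₀ hG]
        linarith
      have : 0 < ((n : ℝ) + 1) ^ (b - 1) := by positivity
      nlinarith

noncomputable def Pser (a : ℝ) : PowerSeries ℝ := PowerSeries.mk fun n => (n : ℝ) ^ (a - 1)

def Dom (A B : PowerSeries ℝ) : Prop :=
  ∀ n, |PowerSeries.coeff n A| ≤ PowerSeries.coeff n B

lemma Dom.mul {A B A' B' : PowerSeries ℝ} (h : Dom A B) (h' : Dom A' B') :
    Dom (A * A') (B * B') := by
  intro n
  rw [PowerSeries.coeff_mul, PowerSeries.coeff_mul]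
  refine (Finset.abs_sum_le_sum_abs _ _).trans (Finset.sum_le_sum fun p _ => ?_)
  rw [abs_mul]
  exact mul_le_mul (h _) (h' _) (abs_nonneg _) ((abs_nonneg _).trans (h _))

lemma Dom.pow {A B : PowerSeries ℝ} (h : Dom A B) (k : ℕ) : Dom (A ^ k) (B ^ k) := by
  induction k with
  | zero =>
    intro n
    rw [pow_zero, pow_zero, PowerSeries.coeff_one]
    split_ifs <;> simp
  | succ k ih => rw [pow_succ, pow_succ]; exact ih.mul h

noncomputable def Vser (a : ℝ) : PowerSeries ℝ := PowerSeries.C (2 * Real.Gamma a) * Wser a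
noncomputable def User (a : ℝ) : PowerSeries ℝ := PowerSeries.C (Real.Gamma a) * Wser a

lemma Vser_pow_coeff (a : ℝ) (k n : ℕ) : PowerSeries.coeff n (Vser a ^ k) =
    (2 * Real.Gamma a) ^ k * PowerSeries.coeff n (Wser (k * a)) := by
  unfold Vser
  rw [mul_pow, ← map_pow, PowerSeries.coeff_C_mul, Wser_pow]

lemma Pser_dom {a : ℝ} (ha : 0 < a) (ha1 : a < 1) : Dom (Pser a) (Vser a) := by
  intro n
  have hG := Real.Gamma_pos_of_pos ha
  unfold Pser Vser
  rw [PowerSeries.coeff_C_mul, PowerSeries.coeff_mk]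
  rcases Nat.eq_zero_or_pos n with rfl | hn
  · rw [Nat.cast_zero, Real.zero_rpow (by linarith)]
    have := Wser_nonneg ha.le 0
    simp only [abs_zero]
    positivity
  · have hn0 : (1 : ℝ) ≤ n := by exact_mod_cast hn
    rw [abs_of_nonneg (by positivity)]
    have h := Wser_lower ha ha1 hn
    have : (n : ℝ) ^ (a - 1) ≤ 2 * ((n : ℝ) ^ a / (n + a)) := by
      rw [Real.rpow_sub_one (by positivity), ← mul_div_assoc,
        div_le_div_iff₀ (by positivity) (by positivity)]
      have h4 : 0 < (n : ℝ) ^ a := by positivity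
      nlinarith
    linarith

lemma User_dom {a : ℝ} (ha : 0 < a) : Dom (User a) (Vser a) := by
  intro n
  have hG := Real.Gamma_pos_of_pos ha
  have := Wser_nonneg ha.le n
  unfold User Vser
  rw [PowerSeries.coeff_C_mul, PowerSeries.coeff_C_mul, abs_of_nonneg (by positivity)]
  nlinarith [mul_nonneg hG.le this]

lemma diff_bound {a : ℝ} (ha : 0 < a) (ha1 : a < 1) (n : ℕ) :
    |PowerSeries.coeff n (Pser a - User a)| ≤ (4 + Real.Gamma a) * ((n : ℝ) + 1) ^ (a - 2) := by
  have hG := Real.Gamma_pos_of_pos ha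
  unfold Pser User
  rw [map_sub, PowerSeries.coeff_C_mul, PowerSeries.coeff_mk]
  rcases Nat.eq_zero_or_pos n with rfl | hn
  · rw [Nat.cast_zero, Real.zero_rpow (by linarith), Wser_coeff, Ring.multichoose_zero_right]
    simp [abs_of_pos hG]
  · have hn0 : (1 : ℝ) ≤ n := by exact_mod_cast hn
    have h1 := Wser_lower ha ha1 hn
    have h2 := Wser_upper ha ha1 hn
    rw [abs_of_nonneg (by linarith)]
    have h3 : (n : ℝ) ^ (a - 1) - (n : ℝ) ^ a / (n + a) ≤ 4 * ((n : ℝ) + 1) ^ (a - 2) := by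
      rw [Real.rpow_sub_one (by positivity), Real.rpow_sub (by positivity), Real.rpow_two]
      have h3 : (n : ℝ) ^ a ≤ (n + 1) ^ a :=
          Real.rpow_le_rpow (by positivity) (by linarith) ha.le
      have e : (n : ℝ) ^ a / n - (n : ℝ) ^ a / (n + a) = n ^ a * (a / (n * (n + a))) := by
        field_simp
        ring
      rw [e]
      have h4 : a / ((n : ℝ) * (n + a)) ≤ 4 / (n + 1) ^ 2 := by
        rw [div_le_div_iff₀ (by positivity) (by positivity)]
        nlinarith [mul_nonneg (by linarith : (0 : ℝ) ≤ 1 - a) (sq_nonneg ((n : ℝ) + 1))]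
      calc _ ≤ ((n : ℝ) + 1) ^ a * (4 / (n + 1) ^ 2) := by gcongr
        _ = _ := by ring
    have : 0 < ((n : ℝ) + 1) ^ (a - 2) := by positivity
    nlinarith

lemma summable_shift {r : ℝ} (hr : r < -1) : Summable fun n : ℕ => ((n : ℝ) + 1) ^ r := by
  have := (summable_nat_add_iff 1).mpr (Real.summable_nat_rpow.mpr hr)
  simpa using this

lemma full_sum {s : ℕ} (hs : 2 ≤ s) : ∃ C : ℝ, 0 < C ∧ ∀ n : ℕ, 1 ≤ n →
    |PowerSeries.coeff n (Pser (1 / s) ^ s) - Real.Gamma (1 / s) ^ s| ≤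
      C * (n : ℝ) ^ (-(1 : ℝ) / (s + 1)) := by
  have hs2 : (2 : ℝ) ≤ s := by exact_mod_cast hs
  set a : ℝ := 1 / s with ha_def
  have ha : 0 < a := by positivity
  have ha2 : a ≤ 1 / 2 := by
    rw [ha_def, div_le_div_iff₀ (by positivity) (by positivity)]; linarith
  have ha1 : a < 1 := by linarith
  have hsa : s * a = 1 := by rw [ha_def]; field_simp
  set e : ℝ := 1 / (s + 1) with he_def
  have he : 0 < e := by positivity
  have he3 : e ≤ 1 / 3 := by
    rw [he_def, div_le_div_iff₀ (by positivity) (by positivity)]; linarith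
  have hea : e ≤ a := by
    rw [he_def, ha_def, div_le_div_iff₀ (by positivity) (by positivity)]; linarith
  have hG := Real.Gamma_pos_of_pos ha
  have hb : ((s - 1 : ℕ) : ℝ) * a = 1 - a := by
    rw [Nat.cast_sub (by omega)]; push_cast; linarith
  obtain ⟨K, hK, hW⟩ := Wser_bound (b := 1 - a) (by linarith) (by linarith)
  have hsum : Summable fun n : ℕ => ((n : ℝ) + 1) ^ (a + e - 2) := summable_shift (by linarith)
  set T := ∑' n : ℕ, ((n : ℝ) + 1) ^ (a + e - 2) with hT
  have hT0 : 0 ≤ T := tsum_nonneg fun n => by positivity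
  set M : ℝ := s * (2 * Real.Gamma a) ^ (s - 1) * K * (4 + Real.Gamma a) with hM
  have hM0 : 0 < M := by positivity
  refine ⟨M * T + 1, by positivity, fun n hn => ?_⟩
  have hn0 : (1 : ℝ) ≤ n := by exact_mod_cast hn
  have hU : PowerSeries.coeff n (User a ^ s) = Real.Gamma a ^ s := by
    unfold User
    rw [mul_pow, ← map_pow, PowerSeries.coeff_C_mul, Wser_pow, hsa, Wser_one_coeff, mul_one]
  rw [← hU, ← map_sub, ← (Commute.all (Pser a) (User a)).geom_sum₂_mul s, PowerSeries.coeff_mul]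
  have hS : ∀ m : ℕ, |PowerSeries.coeff m (∑ i ∈ range s, Pser a ^ i * User a ^ (s - 1 - i))| ≤
      s * (2 * Real.Gamma a) ^ (s - 1) * K * ((m : ℝ) + 1) ^ (-a) := by
    intro m
    rw [map_sum]
    refine (Finset.abs_sum_le_sum_abs _ _).trans ?_
    have : ∀ i ∈ range s, |PowerSeries.coeff m (Pser a ^ i * User a ^ (s - 1 - i))| ≤
        (2 * Real.Gamma a) ^ (s - 1) * (K * ((m : ℝ) + 1) ^ (-a)) := by
      intro i hi
      have hi' := Finset.mem_range.mp hi
      refine (((Pser_dom ha ha1).pow i).mul ((User_dom ha).pow (s - 1 - i)) m).trans ?_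
      rw [← pow_add, show i + (s - 1 - i) = s - 1 by omega, Vser_pow_coeff, hb]
      have := hW m
      rw [show 1 - a - 1 = -a by ring] at this
      gcongr
    refine (Finset.sum_le_sum this).trans ?_
    rw [Finset.sum_const, card_range, nsmul_eq_mul]
    apply le_of_eq; ring
  refine (Finset.abs_sum_le_sum_abs _ _).trans ?_
  have hterm : ∀ p ∈ antidiagonal n,
      |PowerSeries.coeff p.1 (∑ i ∈ range s, Pser a ^ i * User a ^ (s - 1 - i)) *
        PowerSeries.coeff p.2 (Pser a - User a)| ≤
      M * (n : ℝ) ^ (-e) * ((p.2 : ℝ) + 1) ^ (a + e - 2) := by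
    rintro ⟨x, y⟩ hp
    have hxy : x + y = n := by simpa using hp
    rw [abs_mul]
    have h1 := hS x
    have h2 := diff_bound ha ha1 y
    have hx1 : (1 : ℝ) ≤ x + 1 := by linarith [Nat.cast_nonneg (α := ℝ) x]
    have hy1 : (1 : ℝ) ≤ y + 1 := by linarith [Nat.cast_nonneg (α := ℝ) y]
    have h3 : ((x : ℝ) + 1) ^ (-a) ≤ (n : ℝ) ^ (-e) * ((y : ℝ) + 1) ^ e := by
      calc ((x : ℝ) + 1) ^ (-a) ≤ ((x : ℝ) + 1) ^ (-e) :=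
            Real.rpow_le_rpow_of_exponent_le hx1 (by linarith)
        _ = (((x : ℝ) + 1) * (y + 1)) ^ (-e) * ((y : ℝ) + 1) ^ e := by
            rw [Real.mul_rpow (by positivity) (by positivity), mul_assoc,
              ← Real.rpow_add (by positivity)]
            simp
        _ ≤ _ := by
            gcongr ?_ * _
            apply Real.rpow_le_rpow_of_nonpos (by positivity) _ (by linarith)
            rw [← hxy]; push_cast
            nlinarith [Nat.cast_nonneg (α := ℝ) x, Nat.cast_nonneg (α := ℝ) y,
              mul_nonneg (Nat.cast_nonneg (α := ℝ) x) (Nat.cast_nonneg (α := ℝ) y)]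
    calc _ ≤ (s * (2 * Real.Gamma a) ^ (s - 1) * K * ((x : ℝ) + 1) ^ (-a)) *
          ((4 + Real.Gamma a) * ((y : ℝ) + 1) ^ (a - 2)) :=
          mul_le_mul h1 h2 (abs_nonneg _) (by positivity)
      _ ≤ (s * (2 * Real.Gamma a) ^ (s - 1) * K * ((n : ℝ) ^ (-e) * ((y : ℝ) + 1) ^ e)) *
          ((4 + Real.Gamma a) * ((y : ℝ) + 1) ^ (a - 2)) := by gcongr
      _ = M * (n : ℝ) ^ (-e) * (((y : ℝ) + 1) ^ (a - 2) * ((y : ℝ) + 1) ^ e) := by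
          rw [hM]; ring
      _ = _ := by rw [← Real.rpow_add (by positivity)]; congr 2; ring
  refine (Finset.sum_le_sum hterm).trans ?_
  rw [← Finset.mul_sum]
  have h5 : ∑ p ∈ antidiagonal n, ((p.2 : ℝ) + 1) ^ (a + e - 2) ≤ T := by
    rw [Finset.Nat.sum_antidiagonal_eq_sum_range_succ_mk]
    have hr := Finset.sum_range_reflect (fun j : ℕ => ((j : ℝ) + 1) ^ (a + e - 2)) (n + 1)
    simp only [Nat.add_sub_cancel] at hr
    simp only [Nat.succ_eq_add_one]
    rw [hr]
    exact hsum.sum_le_tsum _ fun i _ => by positivity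
  rw [show -(1 : ℝ) / (s + 1) = -e by rw [he_def]; ring]
  have h6 : 0 < (n : ℝ) ^ (-e) := by positivity
  calc _ ≤ M * (n : ℝ) ^ (-e) * T := by gcongr
    _ ≤ _ := by nlinarith

lemma coeff_prod_fin {s : ℕ} (G : Fin s → PowerSeries ℝ) (n : ℕ) :
    PowerSeries.coeff n (∏ i, G i) =
      ∑ x ∈ piAntidiag (univ : Finset (Fin s)) n, ∏ i, PowerSeries.coeff (x i) (G i) := by
  rw [PowerSeries.coeff_prod]
  refine Finset.sum_bij (fun l _ => (l : Fin s → ℕ)) ?_ ?_ ?_ ?_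
  · intro l hl
    rw [mem_finsuppAntidiag] at hl
    simp [hl.1]
  · intro l _ l' _ h
    exact DFunLike.coe_injective h
  · intro x hx
    rw [mem_piAntidiag] at hx
    refine ⟨Finsupp.equivFunOnFinite.symm x, ?_, ?_⟩
    · rw [mem_finsuppAntidiag]
      exact ⟨by simpa using hx.1, by simp⟩
    · simp
  · intro l _
    rfl

lemma diag_le {s : ℕ} {a : ℝ} {i j : Fin s} (hij : i ≠ j) (n : ℕ) :
    ∑ x ∈ (piAntidiag (univ : Finset (Fin s)) n).filter (fun x => x i = x j),
        ∏ k, (x k : ℝ) ^ (a - 1) ≤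
      ∑ t ∈ range (n + 1), if 2 * t ≤ n then
        ((t : ℝ) ^ (a - 1)) ^ 2 * PowerSeries.coeff (n - 2 * t) (Pser a ^ (s - 2)) else 0 := by
  set G : ℕ → Fin s → PowerSeries ℝ := fun t k => if k = i ∨ k = j then
    PowerSeries.C ((t : ℝ) ^ (a - 1)) * PowerSeries.X ^ t else Pser a with hG
  have hGn : ∀ t k m, 0 ≤ PowerSeries.coeff m (G t k) := by
    intro t k m
    simp only [hG]
    split_ifs
    · rw [PowerSeries.coeff_C_mul_X_pow]
      split_ifs <;> positivity
    · unfold Pser; rw [PowerSeries.coeff_mk]; positivity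
  have hprod : ∀ t, PowerSeries.coeff n (∏ k, G t k) = if 2 * t ≤ n then
        ((t : ℝ) ^ (a - 1)) ^ 2 * PowerSeries.coeff (n - 2 * t) (Pser a ^ (s - 2)) else 0 := by
    intro t
    simp only [hG]
    rw [Finset.prod_ite, Finset.prod_const, Finset.prod_const]
    have c1 : (univ.filter fun k : Fin s => k = i ∨ k = j) = {i, j} := by
      ext k; simp
    have c2 : #(univ.filter fun k : Fin s => k = i ∨ k = j) = 2 := by
      rw [c1, card_pair hij]
    have c3 : #(univ.filter fun k : Fin s => ¬ (k = i ∨ k = j)) = s - 2 := by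
      have := Finset.card_filter_add_card_filter_not (s := (univ : Finset (Fin s)))
        (fun k : Fin s => k = i ∨ k = j)
      rw [c2, card_univ, Fintype.card_fin] at this
      omega
    rw [c2, c3, mul_pow, ← map_pow, mul_assoc, PowerSeries.coeff_C_mul, ← pow_mul,
      PowerSeries.coeff_X_pow_mul', mul_comm t 2]
    split_ifs <;> simp
  simp_rw [← hprod, coeff_prod_fin]
  rw [Finset.sum_comm, Finset.sum_filter]
  refine Finset.sum_le_sum fun x hx => ?_
  have hnn : ∀ t ∈ range (n + 1), 0 ≤ ∏ k, PowerSeries.coeff (x k) (G t k) :=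
    fun t _ => Finset.prod_nonneg fun k _ => hGn _ _ _
  split_ifs with h
  · have hxi : x i ∈ range (n + 1) := by
      rw [mem_piAntidiag] at hx
      rw [mem_range, ← hx.1]
      exact Nat.lt_succ_of_le (Finset.single_le_sum (fun _ _ => Nat.zero_le _) (mem_univ i))
    refine le_trans (le_of_eq ?_) (Finset.single_le_sum hnn hxi)
    refine Finset.prod_congr rfl fun k _ => ?_
    simp only [hG]
    split_ifs with hk
    · rcases hk with rfl | rfl
      · rw [PowerSeries.coeff_C_mul_X_pow]; simp
      · rw [PowerSeries.coeff_C_mul_X_pow]; simp [h]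
    · unfold Pser; rw [PowerSeries.coeff_mk]
  · exact Finset.sum_nonneg hnn

lemma diag_bound {s : ℕ} (hs : 2 ≤ s) : ∃ C : ℝ, 0 < C ∧ ∀ n : ℕ, 1 ≤ n →
    (∑ t ∈ range (n + 1), if 2 * t ≤ n then
        ((t : ℝ) ^ ((1 / s : ℝ) - 1)) ^ 2 *
          PowerSeries.coeff (n - 2 * t) (Pser (1 / s : ℝ) ^ (s - 2)) else 0) ≤
      C * (n : ℝ) ^ (-(1 : ℝ) / (s + 1)) := by
  have hs2 : (2 : ℝ) ≤ s := by exact_mod_cast hs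
  have hee : -(1 : ℝ) / (s + 1) = -(1 / (s + 1)) := by ring
  rw [hee]
  set a : ℝ := 1 / s with ha_def
  have ha : 0 < a := by positivity
  set e : ℝ := 1 / (s + 1) with he_def
  have he : 0 < e := by positivity
  have he1 : e ≤ 1 := by
    rw [he_def, div_le_one (by positivity)]; linarith
  have hea : e ≤ a := by
    rw [he_def, ha_def, div_le_div_iff₀ (by positivity) (by positivity)]; linarith
  have hsa : s * a = 1 := by rw [ha_def]; field_simp
  rcases hs.eq_or_lt with h2 | h3
  · refine ⟨2, by norm_num, fun n hn => ?_⟩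
    have hn0 : (1 : ℝ) ≤ n := by exact_mod_cast hn
    have haa : a = 1 / 2 := by rw [ha_def, ← h2]; norm_num
    have hterm : ∀ t ∈ range (n + 1), (if 2 * t ≤ n then
        ((t : ℝ) ^ (a - 1)) ^ 2 *
          PowerSeries.coeff (n - 2 * t) (Pser a ^ (s - 2)) else 0) ≤
        if t = n / 2 then 2 * (n : ℝ) ^ (-1 : ℝ) else 0 := by
      intro t _
      rw [← h2, Nat.sub_self, pow_zero, PowerSeries.coeff_one]
      by_cases h : n = 2 * t
      · have ht : t = n / 2 := by omega
        have ht0 : (0 : ℝ) < t := by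
          have : 0 < t := by omega
          exact_mod_cast this
        rw [if_pos (by omega), if_pos (by omega), if_pos ht, mul_one, ← Real.rpow_natCast,
          ← Real.rpow_mul ht0.le, haa, h]
        norm_num [Real.rpow_neg_one]
        linarith
      · have : (if 2 * t ≤ n then ((t : ℝ) ^ (a - 1)) ^ 2 * (if n - 2 * t = 0 then (1 : ℝ) else 0)
            else 0) = 0 := by
          split_ifs with h4 h5
          · omega
          · simp
          · rfl
        rw [this]
        split_ifs <;> positivity
    refine (Finset.sum_le_sum hterm).trans ?_
    rw [Finset.sum_ite_eq' (range (n + 1)) (n / 2)]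
    have h5 : (n : ℝ) ^ (-1 : ℝ) ≤ (n : ℝ) ^ (-e) :=
      Real.rpow_le_rpow_of_exponent_le hn0 (by linarith)
    split_ifs
    · linarith
    · positivity
  · have hs3 : (3 : ℝ) ≤ s := by exact_mod_cast h3
    have ha3 : a ≤ 1 / 3 := by
      rw [ha_def, div_le_div_iff₀ (by positivity) (by positivity)]; linarith
    have he4 : e ≤ 1 / 4 := by
      rw [he_def, div_le_div_iff₀ (by positivity) (by positivity)]; linarith
    have hG := Real.Gamma_pos_of_pos ha
    have hb : ((s - 2 : ℕ) : ℝ) * a = 1 - 2 * a := by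
      rw [Nat.cast_sub (by omega)]; push_cast; linarith
    obtain ⟨K, hK, hW⟩ := Wser_bound (b := 1 - 2 * a) (by linarith) (by linarith)
    have hsum : Summable fun n : ℕ => (n : ℝ) ^ (2 * a - 2 + e) :=
      Real.summable_nat_rpow.mpr (by linarith)
    set T := ∑' n : ℕ, (n : ℝ) ^ (2 * a - 2 + e) with hT
    have hT0 : 0 ≤ T := tsum_nonneg fun n => by positivity
    set M : ℝ := (2 * Real.Gamma a) ^ (s - 2) * K * 3 ^ e with hM
    have hM0 : 0 < M := by positivity
    refine ⟨M * T + 1, by positivity, fun n hn => ?_⟩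
    have hn0 : (1 : ℝ) ≤ n := by exact_mod_cast hn
    have hterm : ∀ t ∈ range (n + 1), (if 2 * t ≤ n then
        ((t : ℝ) ^ (a - 1)) ^ 2 *
          PowerSeries.coeff (n - 2 * t) (Pser a ^ (s - 2)) else 0) ≤
        M * (n : ℝ) ^ (-e) * (t : ℝ) ^ (2 * a - 2 + e) := by
      intro t _
      split_ifs with h
      · rcases Nat.eq_zero_or_pos t with rfl | ht
        · rw [Nat.cast_zero, Real.zero_rpow (by linarith)]
          have : (0 : ℝ) ≤ 0 ^ (2 * a - 2 + e) := by positivity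
          simp only [ne_eq, OfNat.ofNat_ne_zero, not_false_eq_true, zero_pow, zero_mul]
          positivity
        · obtain ⟨y, hy⟩ := Nat.exists_eq_add_of_le h
          rw [show n - 2 * t = y by omega]
          have ht1 : (1 : ℝ) ≤ t := by exact_mod_cast ht
          have ht0 : (0 : ℝ) < t := by linarith
          have hy1 : (1 : ℝ) ≤ y + 1 := by linarith [Nat.cast_nonneg (α := ℝ) y]
          have h1 := (le_abs_self _).trans (((Pser_dom ha (by linarith)).pow (s - 2)) y)
          rw [Vser_pow_coeff, hb] at h1
          have h2 := hW y
          rw [show 1 - 2 * a - 1 = -(2 * a) by ring] at h2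
          have h3 : ((y : ℝ) + 1) ^ (-(2 * a)) ≤ (n : ℝ) ^ (-e) * (3 ^ e * (t : ℝ) ^ e) := by
            rw [← Real.mul_rpow (by positivity) (by positivity)]
            calc ((y : ℝ) + 1) ^ (-(2 * a)) ≤ ((y : ℝ) + 1) ^ (-e) :=
                  Real.rpow_le_rpow_of_exponent_le hy1 (by linarith)
              _ = (((y : ℝ) + 1) * (3 * t)) ^ (-e) * (3 * (t : ℝ)) ^ e := by
                  rw [Real.mul_rpow (by positivity) (by positivity), mul_assoc,
                    ← Real.rpow_add (by positivity)]
                  simp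
              _ ≤ _ := by
                  gcongr ?_ * _
                  apply Real.rpow_le_rpow_of_nonpos (by positivity) _ (by linarith)
                  rw [hy]; push_cast
                  nlinarith [Nat.cast_nonneg (α := ℝ) y]
          have h4 : ((t : ℝ) ^ (a - 1)) ^ 2 * (t : ℝ) ^ e = (t : ℝ) ^ (2 * a - 2 + e) := by
            rw [← Real.rpow_natCast, ← Real.rpow_mul ht0.le, ← Real.rpow_add ht0]
            congr 1; push_cast; ring
          calc _ ≤ ((t : ℝ) ^ (a - 1)) ^ 2 * ((2 * Real.Gamma a) ^ (s - 2) *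
                (K * ((n : ℝ) ^ (-e) * (3 ^ e * (t : ℝ) ^ e)))) := by
                gcongr
                refine h1.trans ?_
                gcongr
                refine h2.trans ?_
                gcongr
            _ = M * (n : ℝ) ^ (-e) * (((t : ℝ) ^ (a - 1)) ^ 2 * (t : ℝ) ^ e) := by
                rw [hM]; ring
            _ = _ := by rw [h4]
      · positivity
    refine (Finset.sum_le_sum hterm).trans ?_
    rw [← Finset.mul_sum]
    have h5 : ∑ t ∈ range (n + 1), (t : ℝ) ^ (2 * a - 2 + e) ≤ T :=
      hsum.sum_le_tsum _ fun i _ => by positivity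
    have h6 : 0 < (n : ℝ) ^ (-e) := by positivity
    calc _ ≤ M * (n : ℝ) ^ (-e) * T := by gcongr
      _ ≤ _ := by nlinarith

lemma noninj_le {s : ℕ} {a : ℝ} {B : ℝ} (n : ℕ)
    (hB : (∑ t ∈ range (n + 1), if 2 * t ≤ n then
        ((t : ℝ) ^ (a - 1)) ^ 2 * PowerSeries.coeff (n - 2 * t) (Pser a ^ (s - 2)) else 0) ≤ B) :
    ∑ x ∈ (piAntidiag (univ : Finset (Fin s)) n).filter (fun x => ¬ Function.Injective x),
        ∏ k, (x k : ℝ) ^ (a - 1) ≤ #(univ : Finset (Fin s)).offDiag * B := by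
  have h1 : ∑ x ∈ (piAntidiag (univ : Finset (Fin s)) n).filter
        (fun x => ¬ Function.Injective x), ∏ k, (x k : ℝ) ^ (a - 1) ≤
      ∑ x ∈ piAntidiag (univ : Finset (Fin s)) n, ∑ p ∈ (univ : Finset (Fin s)).offDiag,
        if x p.1 = x p.2 then ∏ k, (x k : ℝ) ^ (a - 1) else 0 := by
    rw [Finset.sum_filter]
    refine Finset.sum_le_sum fun x _ => ?_
    have hP : 0 ≤ ∏ k, (x k : ℝ) ^ (a - 1) := Finset.prod_nonneg fun k _ => by positivity
    have hnn : ∀ p ∈ (univ : Finset (Fin s)).offDiag,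
        0 ≤ if x p.1 = x p.2 then ∏ k, (x k : ℝ) ^ (a - 1) else 0 := by
      intro p _
      split_ifs
      · exact hP
      · exact le_rfl
    by_cases h : ¬ Function.Injective x
    · rw [if_pos h]
      rw [Function.Injective] at h
      push Not at h
      obtain ⟨i, j, hx, hij⟩ := h
      have hm : (i, j) ∈ (univ : Finset (Fin s)).offDiag := by simp [hij]
      refine le_trans ?_ (Finset.single_le_sum hnn hm)
      simp [hx]
    · rw [if_neg h]
      exact Finset.sum_nonneg hnn
  refine h1.trans ?_
  rw [Finset.sum_comm, ← nsmul_eq_mul]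
  refine Finset.sum_le_card_nsmul _ _ _ fun p hp => ?_
  rw [← Finset.sum_filter]
  exact (diag_le (by simpa using hp) n).trans hB

lemma inj_eq {s : ℕ} {a : ℝ} (n : ℕ) :
    ∑ x ∈ (piAntidiag (univ : Finset (Fin s)) n).filter (fun x => Function.Injective x),
        ∏ k, (x k : ℝ) ^ (a - 1) =
      s.factorial * ∑ x ∈ (piAntidiag (univ : Finset (Fin s)) n).filter (fun x => StrictAnti x),
        ∏ k, (x k : ℝ) ^ (a - 1) := by
  classical
  have hex : ∀ x : Fin s → ℕ, Function.Injective x →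
      ∃! σ : Equiv.Perm (Fin s), StrictAnti (x ∘ σ) := by
    intro x hx
    have hm := Tuple.monotone_sort (OrderDual.toDual ∘ x)
    refine ⟨Tuple.sort (OrderDual.toDual ∘ x), ?_, ?_⟩
    · have hanti : Antitone (x ∘ Tuple.sort (OrderDual.toDual ∘ x)) := fun i j hij => hm hij
      exact hanti.strictAnti_of_injective (hx.comp (Equiv.injective _))
    · intro τ hτ
      have hanti : Antitone (x ∘ Tuple.sort (OrderDual.toDual ∘ x)) := fun i j hij => hm hij
      have := Tuple.unique_antitone hτ.antitone hanti
      ext i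
      exact congrArg _ (hx (congrFun this i))
  have h1 : ∑ x ∈ (piAntidiag (univ : Finset (Fin s)) n).filter (fun x => Function.Injective x),
        ∏ k, (x k : ℝ) ^ (a - 1) =
      ∑ x ∈ piAntidiag (univ : Finset (Fin s)) n, ∑ σ : Equiv.Perm (Fin s),
        if StrictAnti (x ∘ σ) then ∏ k, (x k : ℝ) ^ (a - 1) else 0 := by
    rw [Finset.sum_filter]
    refine Finset.sum_congr rfl fun x _ => ?_
    split_ifs with h
    · obtain ⟨σ, hσ, hu⟩ := hex x h
      rw [Finset.sum_eq_single σ]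
      · rw [if_pos hσ]
      · intro τ _ hne
        rw [if_neg fun hτ => hne (hu τ hτ)]
      · simp
    · symm
      refine Finset.sum_eq_zero fun σ _ => if_neg fun hσ => h ?_
      have := hσ.injective
      exact (Equiv.injective_comp σ x).mp this
  rw [h1, Finset.sum_comm]
  have h2 : ∀ σ : Equiv.Perm (Fin s), ∑ x ∈ piAntidiag (univ : Finset (Fin s)) n,
      (if StrictAnti (x ∘ σ) then ∏ k, (x k : ℝ) ^ (a - 1) else 0) =
      ∑ x ∈ (piAntidiag (univ : Finset (Fin s)) n).filter (fun x => StrictAnti x),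
        ∏ k, (x k : ℝ) ^ (a - 1) := by
    intro σ
    rw [Finset.sum_filter]
    refine Finset.sum_bij' (fun x _ => x ∘ σ) (fun x _ => x ∘ σ.symm) ?_ ?_ ?_ ?_ ?_
    · intro x hx
      rw [mem_piAntidiag] at hx ⊢
      refine ⟨?_, by simp⟩
      rw [← hx.1]
      exact Equiv.sum_comp σ x
    · intro x hx
      rw [mem_piAntidiag] at hx ⊢
      refine ⟨?_, by simp⟩
      rw [← hx.1]
      exact Equiv.sum_comp σ.symm x
    · intro x _
      ext i; simp
    · intro x _
      ext i; simp
    · intro x _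
      congr 1
      exact (Equiv.prod_comp σ fun k => (x k : ℝ) ^ (a - 1)).symm
  rw [Finset.sum_congr rfl fun σ _ => h2 σ, Finset.sum_const, card_univ, Fintype.card_perm,
    Fintype.card_fin, nsmul_eq_mul]

/-- The refinement of Lemma 1 (iii): the sum over tuples of positive integers
`1 ≤ x_s < ⋯ < x_1` with `x_1 + ⋯ + x_s = n` of `(x_1 ⋯ x_s)^{-1+1/s}` equals
`s^s λ_s + O(n^{-1/(s+1)})`. -/
theorem stmt_17 (s : ℕ) (hs : 2 ≤ s) :
    ∃ C : ℝ, 0 < C ∧ ∀ n : ℕ, 1 ≤ n →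
      |(∑ x ∈ (Fintype.piFinset fun _ : Fin s => Finset.Icc 1 n).filter
            (fun x : Fin s → ℕ => (∀ i j : Fin s, i < j → x j < x i) ∧ ∑ i, x i = n),
          ∏ i, (x i : ℝ) ^ (-1 + 1 / (s : ℝ))) -
        (s : ℝ) ^ s * lambdaS s| ≤
      C * (n : ℝ) ^ (-(1 : ℝ) / (s + 1)) := by
  obtain ⟨C1, hC1, h1⟩ := full_sum hs
  obtain ⟨C2, hC2, h2⟩ := diag_bound hs
  refine ⟨C1 + #(univ : Finset (Fin s)).offDiag * C2, by positivity, fun n hn => ?_⟩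
  have hs2 : (2 : ℝ) ≤ s := by exact_mod_cast hs
  have ha1 : (1 / s : ℝ) < 1 := by
    rw [div_lt_one (by positivity)]; linarith
  have e1 : ∑ x ∈ (Fintype.piFinset fun _ : Fin s => Finset.Icc 1 n).filter
            (fun x : Fin s → ℕ => (∀ i j : Fin s, i < j → x j < x i) ∧ ∑ i, x i = n),
          ∏ i, (x i : ℝ) ^ (-1 + 1 / (s : ℝ)) =
      ∑ x ∈ (piAntidiag (univ : Finset (Fin s)) n).filter (fun x => StrictAnti x),
        ∏ k, (x k : ℝ) ^ ((1 / s : ℝ) - 1) := by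
    rw [show -1 + 1 / (s : ℝ) = 1 / s - 1 by ring]
    refine Finset.sum_subset ?_ ?_
    · intro x hx
      rw [Finset.mem_filter] at hx ⊢
      rw [mem_piAntidiag]
      exact ⟨⟨hx.2.2, by simp⟩, fun i j hij => hx.2.1 i j hij⟩
    · intro x hx hx'
      rw [Finset.mem_filter, mem_piAntidiag] at hx
      by_contra hne
      apply hx'
      rw [Finset.mem_filter, Fintype.mem_piFinset]
      refine ⟨fun i => ?_, fun i j hij => hx.2 hij, hx.1.1⟩
      rw [Finset.mem_Icc]
      constructor
      · by_contra h0
        apply hne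
        refine Finset.prod_eq_zero (mem_univ i) ?_
        rw [show x i = 0 by omega, Nat.cast_zero, Real.zero_rpow (by linarith)]
      · rw [← hx.1.1]
        exact Finset.single_le_sum (fun _ _ => Nat.zero_le _) (mem_univ i)
  rw [e1]
  have hfull : PowerSeries.coeff n (Pser (1 / s) ^ s) =
      ∑ x ∈ piAntidiag (univ : Finset (Fin s)) n, ∏ k, (x k : ℝ) ^ ((1 / s : ℝ) - 1) := by
    have := coeff_prod_fin (fun _ : Fin s => Pser (1 / s)) n
    rw [Finset.prod_const, card_univ, Fintype.card_fin] at this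
    rw [this]
    unfold Pser
    simp only [PowerSeries.coeff_mk]
  have h1n := h1 n hn
  have h2n := noninj_le (s := s) n (h2 n hn)
  rw [hfull, ← Finset.sum_filter_add_sum_filter_not _ (fun x : Fin s → ℕ => Function.Injective x),
    inj_eq] at h1n
  have h0 : 0 ≤ ∑ x ∈ (piAntidiag (univ : Finset (Fin s)) n).filter
      (fun x => ¬ Function.Injective x), ∏ k, (x k : ℝ) ^ ((1 / s : ℝ) - 1) :=
    Finset.sum_nonneg fun x _ => Finset.prod_nonneg fun k _ => by positivity
  generalize (∑ x ∈ (piAntidiag (univ : Finset (Fin s)) n).filter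
      (fun x => ¬ Function.Injective x), ∏ k, (x k : ℝ) ^ ((1 / s : ℝ) - 1)) = N at *
  generalize (∑ x ∈ (piAntidiag (univ : Finset (Fin s)) n).filter (fun x => StrictAnti x),
        ∏ k, (x k : ℝ) ^ ((1 / s : ℝ) - 1)) = S at *
  have hf : (1 : ℝ) ≤ s.factorial := by exact_mod_cast Nat.factorial_pos s
  have e2 : (s : ℝ) ^ s * lambdaS s = Real.Gamma (1 / s) ^ s / s.factorial := by
    unfold lambdaS
    field_simp
  rw [e2]
  have e3 : S - Real.Gamma (1 / s) ^ s / s.factorial =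
      (s.factorial * S - Real.Gamma (1 / s) ^ s) / s.factorial := by
    field_simp
  rw [e3, abs_div, abs_of_pos (show (0 : ℝ) < s.factorial by linarith)]
  refine (div_le_self (abs_nonneg _) hf).trans ?_
  rw [abs_le] at h1n ⊢
  constructor <;> nlinarith [h1n.1, h1n.2]
end
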